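/- Let X = {a, b} and V₃ ⊆ X* be the least language satisfying V₃ = {a} ∪ {b}·V₃·V₃·V₃. Then the ω-language F₂ := X^ω \ V₃·X^ω is closed and nowhere dense in the Cantor space X^ω, has equidistribution measure μ₌(F₂) = (3 − √5)/2 > 0, and does not have the Automatic Baire property. -/

import Mathlib

open Set MeasureTheory Computability

namespace AutoBaire

/-- The Cantor topology on the space of ω-words over `X`:
the product of the discrete topology on `X`. -/
def cantorTop (X : Type) : TopologicalSpace (ℕ → X) :=
  @Pi.topologicalSpace ℕ (fun _ => X) (fun _ => ⊥)

/-- The Borel σ-algebra of the Cantor space. -/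
def cantorBorel (X : Type) : MeasurableSpace (ℕ → X) :=
  @borel (ℕ → X) (cantorTop X)

variable {X : Type}

/-- Concatenation `w·ξ` of a finite word with an ω-word. -/
def wcat (w : List X) (ξ : ℕ → X) : ℕ → X :=
  Stream'.appendStream' w ξ

/-- The ball (cylinder) `w·X^ω`. -/
def cyl (w : List X) : Set (ℕ → X) := {ξ | ∃ η : ℕ → X, ξ = wcat w η}

/-- The ω-language `W·A` for a language `W` and an ω-language `A`. -/
def catOmega (W : Language X) (A : Set (ℕ → X)) : Set (ℕ → X) :=
  {ξ | ∃ w ∈ W, ∃ η ∈ A, ξ = wcat w η}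

/-- `V^ω`: the set of ω-words that are infinite concatenations
`v₁·v₂·⋯` of non-empty words `vᵢ ∈ V`. -/
def omegaPow (V : Language X) : Set (ℕ → X) :=
  {ξ | ∃ f : ℕ → List X, (∀ i, f i ∈ V ∧ f i ≠ []) ∧
    ∀ k, ξ ∈ cyl (((List.range k).map f).flatten)}

/-- Regular languages: those obtained from finite languages via the operations
union, concatenation and star. -/
inductive IsRegLang : Language X → Prop
  | finite (W : Language X) : (W : Set (List X)).Finite → IsRegLang W
  | union (W V : Language X) : IsRegLang W → IsRegLang V → IsRegLang (W + V)
  | concat (W V : Language X) : IsRegLang W → IsRegLang V → IsRegLang (W * V)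
  | star (W : Language X) : IsRegLang W → IsRegLang (W∗)

/-- Regular ω-languages: finite unions `⋃ᵢ Wᵢ·Vᵢ^ω` with `Wᵢ, Vᵢ` regular. -/
def IsRegOmega (F : Set (ℕ → X)) : Prop :=
  ∃ (n : ℕ) (W V : Fin n → Language X),
    (∀ i, IsRegLang (W i) ∧ IsRegLang (V i)) ∧
    F = ⋃ i, catOmega (W i) (omegaPow (V i))

/-- `X*·w·X^ω`: the set of ω-words containing `w` as an infix. -/
def infixOcc (w : List X) : Set (ℕ → X) :=
  {ξ | ∃ u : List X, ξ ∈ cyl (u ++ w)}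

/-- An ω-word is disjunctive if every finite word occurs in it as an infix. -/
def Disjunctive (ξ : ℕ → X) : Prop := ∀ w : List X, ξ ∈ infixOcc w

/-- Ultimately periodic ω-words: `ξ = w·v·v·v·⋯` with `v ≠ e`. -/
def UltPeriodic (ξ : ℕ → X) : Prop :=
  ∃ (w v : List X) (h : v ≠ []), ξ = wcat w (Stream'.cycle v h)

/-- The Automatic Baire property: `F Δ E ⊆ F'` for some regular open
ω-language `E` and some regular ω-language `F'` of first Baire category. -/
def HasABP (F : Set (ℕ → X)) : Prop :=
  ∃ E F' : Set (ℕ → X),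
    IsRegOmega E ∧ @IsOpen _ (cantorTop X) E ∧
    IsRegOmega F' ∧ @IsMeagre _ (cantorTop X) F' ∧
    symmDiff F E ⊆ F'

/-- The measure is finite and non-null: `0 < μ(X^ω) < ∞`. -/
def FiniteNonNull (μ : @MeasureTheory.Measure (ℕ → X) (cantorBorel X)) : Prop :=
  0 < μ Set.univ ∧ μ Set.univ < ⊤

/-- `supp(μ) = X^ω`: every non-empty open set has positive measure. -/
def FullSupport (μ : @MeasureTheory.Measure (ℕ → X) (cantorBorel X)) : Prop :=
  ∀ U : Set (ℕ → X), @IsOpen _ (cantorTop X) U → U.Nonempty → 0 < μ U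

/-- The balance condition: there is `c > 0` such that for all `w ∈ X*`, `x ∈ X`
either `μ(wx·X^ω) = 0` or `c·μ(w·X^ω) ≤ μ(wx·X^ω)`. -/
def Balanced (μ : @MeasureTheory.Measure (ℕ → X) (cantorBorel X)) : Prop :=
  ∃ c : ENNReal, 0 < c ∧ ∀ (w : List X) (x : X),
    μ (cyl (w ++ [x])) = 0 ∨ c * μ (cyl w) ≤ μ (cyl (w ++ [x]))


/-- The fixed-point equation `V = {a} ∪ {b}·V·V·V`. -/
def V3Eq (a b : X) (V : Language X) : Prop :=
  ∀ u : List X, u ∈ V ↔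
    (u = [a] ∨ ∃ v₁ ∈ V, ∃ v₂ ∈ V, ∃ v₃ ∈ V, u = [b] ++ v₁ ++ v₂ ++ v₃)


/-! ### finitely many left quotients -/

theorem fq_of_reg {W : Language X} (h : IsRegLang W) :
    (Set.range W.leftQuotient).Finite := by
  induction h with
  | finite W hW =>
    have hs : (⋃ w ∈ (W : Set (List X)), {s : List X | s <:+ w}).Finite := by
      refine hW.biUnion fun w _ => ?_
      have : {s : List X | s <:+ w} = {s | s ∈ w.tails} := by
        ext s; simp
      rw [this]; exact List.finite_toSet _
    refine hs.powerset.subset ?_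
    rintro _ ⟨x, rfl⟩ y hy
    simp only [Set.mem_iUnion]
    exact ⟨x ++ y, hy, List.suffix_append _ _⟩
  | union W V _ _ hW hV =>
    refine (Set.Finite.image2 (fun A B => A + B) hW hV).subset ?_
    rintro _ ⟨x, rfl⟩
    exact ⟨_, ⟨x, rfl⟩, _, ⟨x, rfl⟩, rfl⟩
  | concat W V _ _ hW hV =>
    refine (Set.Finite.image2 (fun (A : Language X) (S : Set (Language X)) =>
      A * V + (sSup S : Language X)) hW hV.powerset).subset ?_
    rintro _ ⟨x, rfl⟩
    refine ⟨_, ⟨x, rfl⟩, {L | ∃ u ∈ W, ∃ v, x = u ++ v ∧ L = V.leftQuotient v}, ?_, ?_⟩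
    · rintro _ ⟨u, _, v, _, rfl⟩; exact ⟨v, rfl⟩
    · ext y
      constructor
      · rintro (⟨s, hs, t, ht, rfl⟩ | ⟨L, ⟨u, hu, v, rfl, rfl⟩, hy⟩)
        · exact ⟨x ++ s, hs, t, ht, by simp⟩
        · exact ⟨u, hu, v ++ y, hy, by simp⟩
      · rintro ⟨s, hs, t, ht, hst⟩
        simp only at hst
        rcases List.append_eq_append_iff.1 hst with ⟨c, rfl, rfl⟩ | ⟨c, rfl, rfl⟩
        · right
          exact ⟨_, ⟨s, hs, c, rfl, rfl⟩, ht⟩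
        · left
          exact ⟨c, hs, t, ht, rfl⟩
  | star W _ hW =>
    refine ((hW.powerset.image (fun (S : Set (Language X)) =>
      (sSup S : Language X) * W∗)).insert (W∗)).subset ?_
    rintro _ ⟨x, rfl⟩
    by_cases hx : x = []
    · subst hx; left; rfl
    right
    refine ⟨{L | ∃ u ∈ W∗, ∃ v, x = u ++ v ∧ L = W.leftQuotient v}, ?_, ?_⟩
    · rintro _ ⟨u, _, v, _, rfl⟩; exact ⟨v, rfl⟩
    · ext y
      constructor
      · rintro ⟨t, ⟨L, ⟨u, hu, v, rfl, rfl⟩, hy⟩, s, hs, rfl⟩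
        obtain ⟨L1, rfl, h1⟩ := Language.mem_kstar.1 hu
        obtain ⟨L2, rfl, h2⟩ := Language.mem_kstar.1 hs
        refine Language.mem_kstar.2 ⟨L1 ++ [v ++ t] ++ L2, by simp, ?_⟩
        intro z hz
        simp only [List.mem_append, List.mem_singleton] at hz
        rcases hz with (hz | rfl) | hz
        exacts [h1 z hz, hy, h2 z hz]
      · intro hy
        obtain ⟨L, hL, hm⟩ := Language.mem_kstar.1 (show x ++ y ∈ W∗ from hy)
        have key : ∀ (L : List (List X)) (x : List X), x ≠ [] → x ++ y = L.flatten →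
            (∀ z ∈ L, z ∈ W) → ∃ u ∈ W∗, ∃ v t s, x = u ++ v ∧ y = t ++ s ∧ v ++ t ∈ W ∧ s ∈ W∗ := by
          intro L
          induction L with
          | nil => intro x hx h; simp at h; exact absurd h.1 hx
          | cons l L ih =>
            intro x hx h hm
            rw [List.flatten_cons] at h
            rcases List.append_eq_append_iff.1 h with ⟨c, rfl, rfl⟩ | ⟨c, rfl, hc⟩
            · refine ⟨[], Language.nil_mem_kstar _, x, c, _, rfl, rfl, hm _ (by simp), ?_⟩
              exact Language.join_mem_kstar fun z hz => hm z (by simp [hz])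
            · by_cases hcn : c = []
              · subst hcn
                refine ⟨[], Language.nil_mem_kstar _, l, [], y, by simp, by simp,
                  by simpa using hm l (by simp), ?_⟩
                rw [show y = L.flatten by simpa using hc.symm]
                exact Language.join_mem_kstar fun z hz => hm z (by simp [hz])
              · obtain ⟨u, hu, v, t, s, rfl, h1, h2, h3⟩ :=
                  ih c hcn hc.symm fun z hz => hm z (by simp [hz])
                obtain ⟨L1, rfl, hL1⟩ := Language.mem_kstar.1 hu
                refine ⟨l ++ L1.flatten, ?_, v, t, s, by simp, h1, h2, h3⟩
                refine Language.mem_kstar.2 ⟨l :: L1, by simp, ?_⟩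
                intro z hz
                rcases List.mem_cons.1 hz with rfl | hz
                · exact hm _ (by simp)
                · exact hL1 z hz
        obtain ⟨u, hu, v, t, s, h0, rfl, h2, h3⟩ := key L x hx hL hm
        exact ⟨t, ⟨_, ⟨u, hu, v, h0, rfl⟩, h2⟩, s, h3, rfl⟩

/-- A regular language in which every word occurs as an infix is dense above some word. -/
theorem dense_word {L : Language X} (hL : (Set.range L.leftQuotient).Finite)
    (hd : ∀ u, ∃ x y, x ++ u ++ y ∈ L) : ∃ w, ∀ y, ∃ z, w ++ y ++ z ∈ L := by
  by_contra! hcon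
  have key : ∀ S : Set (Language X), S.Finite → S ⊆ Set.range L.leftQuotient →
      ∃ u, ∀ A ∈ S, ∀ z, u ++ z ∉ A := by
    intro S hS
    induction S, hS using Set.Finite.induction_on with
    | empty => intro _; exact ⟨[], by simp⟩
    | insert _ _ ih =>
      rename_i A S _ _
      intro hsub
      obtain ⟨u, hu⟩ := ih fun B hB => hsub (Set.mem_insert_of_mem _ hB)
      obtain ⟨x, rfl⟩ := hsub (Set.mem_insert _ _)
      obtain ⟨y, hy⟩ := hcon (x ++ u)
      refine ⟨u ++ y, ?_⟩
      intro B hB z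
      rcases hB with rfl | hB
      · rw [Language.mem_leftQuotient]; simpa using hy z
      · simpa using hu B hB (y ++ z)
  obtain ⟨u, hu⟩ := key _ hL subset_rfl
  obtain ⟨x, y, h⟩ := hd u
  exact hu _ ⟨x, rfl⟩ y (by rw [Language.mem_leftQuotient]; simpa using h)

/-! ### words and cylinders -/

def pre (ξ : ℕ → X) (n : ℕ) : List X := (List.range n).map ξ

theorem wcat_nil (ξ : ℕ → X) : wcat [] ξ = ξ := rfl

theorem wcat_cons_zero (a : X) (w : List X) (ξ : ℕ → X) : wcat (a :: w) ξ 0 = a := rfl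

theorem wcat_cons_succ (a : X) (w : List X) (ξ : ℕ → X) (n : ℕ) :
    wcat (a :: w) ξ (n + 1) = wcat w ξ n := rfl

theorem wcat_lt (w : List X) (ξ : ℕ → X) (i : ℕ) (h : i < w.length) : wcat w ξ i = w[i] := by
  induction w generalizing i with
  | nil => simp at h
  | cons a w ih =>
    cases i with
    | zero => rfl
    | succ i => simpa [wcat_cons_succ] using ih i (by simpa using h)

theorem wcat_add (w : List X) (ξ : ℕ → X) (i : ℕ) : wcat w ξ (w.length + i) = ξ i := by
  induction w with
  | nil => simp [wcat_nil]
  | cons a w ih =>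
    rw [show (a :: w).length + i = (w.length + i) + 1 by simp; omega, wcat_cons_succ, ih]

theorem wcat_append (u v : List X) (ξ : ℕ → X) : wcat (u ++ v) ξ = wcat u (wcat v ξ) := by
  induction u with
  | nil => rfl
  | cons a u ih =>
    funext n
    cases n with
    | zero => rfl
    | succ n => simp only [List.cons_append, wcat_cons_succ, ih]

theorem wcat_inj (w : List X) {ξ η : ℕ → X} (h : wcat w ξ = wcat w η) : ξ = η := by
  funext i
  rw [← wcat_add w ξ, h, wcat_add]

theorem mem_cyl {w : List X} {ξ : ℕ → X} :
    ξ ∈ cyl w ↔ ∀ i (h : i < w.length), ξ i = w[i] := by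
  constructor
  · rintro ⟨η, rfl⟩ i h; exact wcat_lt _ _ _ h
  · intro h
    refine ⟨fun i => ξ (w.length + i), ?_⟩
    funext i
    by_cases hi : i < w.length
    · rw [wcat_lt _ _ _ hi, h i hi]
    · obtain ⟨j, rfl⟩ := Nat.exists_eq_add_of_le (not_lt.1 hi)
      rw [wcat_add]

@[simp] theorem length_pre (ξ : ℕ → X) (n : ℕ) : (pre ξ n).length = n := by simp [pre]

theorem mem_cyl_iff_pre {w : List X} {ξ : ℕ → X} : ξ ∈ cyl w ↔ pre ξ w.length = w := by
  rw [mem_cyl]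
  constructor
  · intro h
    apply List.ext_getElem
    · simp
    · intro i h1 h2; simpa [pre] using h i h2
  · intro h i hi
    have := List.getElem_of_eq h (i := i) (by simpa using hi)
    simpa [pre] using this

theorem mem_cyl_pre (ξ : ℕ → X) (n : ℕ) : ξ ∈ cyl (pre ξ n) := by
  rw [mem_cyl_iff_pre]; simp

theorem pre_prefix (ξ : ℕ → X) {m n : ℕ} (h : m ≤ n) : pre ξ m <+: pre ξ n := by
  obtain ⟨k, rfl⟩ := Nat.exists_eq_add_of_le h
  simp [pre, List.range_add]

theorem cyl_anti {u v : List X} (h : u <+: v) : cyl v ⊆ cyl u := by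
  obtain ⟨t, rfl⟩ := h
  rintro _ ⟨η, rfl⟩
  exact ⟨wcat t η, wcat_append _ _ _⟩

theorem prefix_of_mem_cyl {u v : List X} {ξ : ℕ → X} (hu : ξ ∈ cyl u) (hv : ξ ∈ cyl v)
    (h : u.length ≤ v.length) : u <+: v := by
  rw [mem_cyl_iff_pre] at hu hv
  rw [← hu, ← hv]; exact pre_prefix _ h

theorem wcat_mem_cyl {u w : List X} {ξ : ℕ → X} : wcat w ξ ∈ cyl (w ++ u) ↔ ξ ∈ cyl u := by
  constructor
  · rintro ⟨η, h⟩
    rw [wcat_append] at h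
    exact ⟨η, wcat_inj _ h⟩
  · rintro ⟨η, rfl⟩; exact ⟨η, (wcat_append _ _ _).symm⟩

theorem cyl_nil : cyl ([] : List X) = Set.univ := by
  ext ξ; simp [mem_cyl]

theorem cyl_nonempty [Inhabited X] (w : List X) : (cyl w).Nonempty := ⟨_, fun _ => default, rfl⟩

def fl (f : ℕ → List X) (k : ℕ) : List X := ((List.range k).map f).flatten

theorem fl_zero (f : ℕ → List X) : fl f 0 = [] := rfl

theorem fl_succ (f : ℕ → List X) (k : ℕ) : fl f (k+1) = fl f k ++ f k := by
  simp [fl, List.range_succ]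

theorem fl_succ' (f : ℕ → List X) (k : ℕ) : fl f (k+1) = f 0 ++ fl (fun i => f (i+1)) k := by
  simp [fl, List.range_succ_eq_map, Function.comp_def]

theorem fl_prefix (f : ℕ → List X) {k l : ℕ} (h : k ≤ l) : fl f k <+: fl f l := by
  induction h with
  | refl => exact List.prefix_rfl
  | step _ ih => rw [fl_succ]; exact ih.trans (List.prefix_append _ _)

theorem le_length_fl (f : ℕ → List X) (hf : ∀ i, f i ≠ []) (k : ℕ) : k ≤ (fl f k).length := by
  induction k with
  | zero => simp
  | succ k ih =>
    have := List.length_pos_iff.2 (hf k)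
    rw [fl_succ, List.length_append]; omega

theorem exists_limit (f : ℕ → List X) (hf : ∀ i, f i ≠ []) : ∃ ξ : ℕ → X, ∀ k, ξ ∈ cyl (fl f k) := by
  refine ⟨fun i => (fl f (i+1))[i]'(le_length_fl f hf (i+1)), fun k => mem_cyl.2 fun i hi => ?_⟩
  rcases le_total (i+1) k with h | h
  · exact (fl_prefix f h).getElem _
  · exact ((fl_prefix f h).getElem hi).symm

/-- Coinduction principle for `omegaPow`. -/
theorem omegaPow_coind {V : Language X} (A : Set (ℕ → X))
    (hA : ∀ ζ ∈ A, ∃ v ∈ V, v ≠ [] ∧ ∃ ζ' ∈ A, ζ = wcat v ζ') {ξ : ℕ → X} (hξ : ξ ∈ A) :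
    ξ ∈ omegaPow V := by
  choose! v hv hne n hn hcat using hA
  have hit : ∀ k, n^[k] ξ ∈ A := by
    intro k
    induction k with
    | zero => exact hξ
    | succ k ih => rw [Function.iterate_succ_apply']; exact hn _ ih
  refine ⟨fun k => v (n^[k] ξ), fun i => ⟨hv _ (hit i), hne _ (hit i)⟩, fun k => ?_⟩
  have : ∀ k, ξ = wcat (fl (fun k => v (n^[k] ξ)) k) (n^[k] ξ) := by
    intro k
    induction k with
    | zero => rfl
    | succ k ih =>
      rw [fl_succ, wcat_append, Function.iterate_succ_apply', ← hcat _ (hit k)]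
      exact ih
  exact ⟨_, this k⟩

theorem omegaPow_unfold {V : Language X} {ξ : ℕ → X} (h : ξ ∈ omegaPow V) :
    ∃ v ∈ V, v ≠ [] ∧ ∃ ζ ∈ omegaPow V, ξ = wcat v ζ := by
  obtain ⟨f, hf, h⟩ := h
  obtain ⟨ζ, hζ⟩ := h 1
  have hζ' : ξ = wcat (f 0) ζ := by simpa using hζ
  refine ⟨f 0, (hf 0).1, (hf 0).2, ζ, ⟨fun i => f (i+1), fun i => hf _, fun k => ?_⟩, hζ'⟩
  have := h (k+1)
  change ξ ∈ cyl (fl f (k+1)) at this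
  rw [fl_succ', hζ', wcat_mem_cyl] at this
  exact this

theorem omegaPow_star {V : Language X} {ξ : ℕ → X} (h : ξ ∈ omegaPow (V∗)) : ξ ∈ omegaPow V := by
  refine omegaPow_coind {ξ | ∃ L : List (List X), (∀ y ∈ L, y ∈ V ∧ y ≠ []) ∧
    ∃ ζ ∈ omegaPow (V∗), ξ = wcat L.flatten ζ} ?_ ⟨[], by simp, ξ, h, rfl⟩
  have hcons : ∀ (v : List X) (L : List (List X)) (ζ), (∀ y ∈ v :: L, y ∈ V ∧ y ≠ []) →
      ζ ∈ omegaPow (V∗) → ∃ v' ∈ V, v' ≠ [] ∧ ∃ ζ' ∈ {ξ | ∃ L : List (List X),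
      (∀ y ∈ L, y ∈ V ∧ y ≠ []) ∧ ∃ ζ ∈ omegaPow (V∗), ξ = wcat L.flatten ζ},
      wcat (v :: L).flatten ζ = wcat v' ζ' := by
    intro v L ζ hL hζ
    refine ⟨v, (hL v (by simp)).1, (hL v (by simp)).2, wcat L.flatten ζ,
      ⟨L, fun y hy => hL y (by simp [hy]), ζ, hζ, rfl⟩, ?_⟩
    rw [List.flatten_cons, wcat_append]
  rintro _ ⟨L, hL, ζ, hζ, rfl⟩
  cases L with
  | cons v L => exact hcons v L ζ hL hζ
  | nil =>
    obtain ⟨u, hu, hne, ζ', hζ', rfl⟩ := omegaPow_unfold hζ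
    obtain ⟨L, rfl, hL⟩ := Language.mem_kstar_iff_exists_nonempty.1 hu
    cases L with
    | nil => simp at hne
    | cons v L => exact hcons v L ζ' hL hζ'

/-! ### topology -/

theorem isOpen_cyl (w : List Bool) : IsOpen (cyl w) := by
  have : cyl w = ⋂ i : Fin w.length, {ξ : ℕ → Bool | ξ i = w[i]} := by
    ext ξ
    simp only [mem_cyl, Set.mem_iInter, Set.mem_ofPred_eq]
    exact ⟨fun h i => h i i.2, fun h i hi => h ⟨i, hi⟩⟩
  rw [this]
  refine isOpen_iInter_of_finite fun i => ?_
  have hc : Continuous fun ξ : ℕ → Bool => ξ (i : ℕ) := continuous_apply (i : ℕ)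
  exact (isOpen_discrete ({w[i]} : Set Bool)).preimage hc

theorem exists_cyl_subset {U : Set (ℕ → Bool)} (hU : IsOpen U) {ξ : ℕ → Bool} (hξ : ξ ∈ U) :
    ∃ n, ∀ m, n ≤ m → cyl (pre ξ m) ⊆ U := by
  obtain ⟨I, u, h1, h2⟩ := isOpen_pi_iff.1 hU ξ hξ
  refine ⟨I.sup id + 1, fun m hm η hη => h2 ?_⟩
  intro i hi
  have hi' : i ≤ I.sup id := Finset.le_sup (f := id) hi
  have := mem_cyl.1 hη i (by simp; omega)
  simp only [pre, List.getElem_map, List.getElem_range] at this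
  rw [this]
  exact (h1 i hi).2

theorem exists_avoid {N : Set (ℕ → Bool)} (hN : IsNowhereDense N) (p : List Bool) :
    ∃ y, Disjoint (cyl (p ++ y)) N := by
  have h1 : ¬ cyl p ⊆ closure N := by
    intro h
    have := interior_maximal h (isOpen_cyl p)
    rw [hN] at this
    exact (cyl_nonempty p).not_subset_empty this
  obtain ⟨ξ, hξ, hξN⟩ := Set.not_subset.1 h1
  obtain ⟨n, hn⟩ := exists_cyl_subset (isClosed_closure (s := N)).isOpen_compl hξN
  have hp : p <+: pre ξ (max n p.length) :=
    prefix_of_mem_cyl hξ (mem_cyl_pre _ _) (by simp)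
  obtain ⟨y, hy⟩ := hp
  refine ⟨y, ?_⟩
  rw [hy]
  refine Set.disjoint_left.2 fun η h h' => hn _ (le_max_left _ _) h (subset_closure h')

theorem not_meagre {W V : Language Bool} {w₀ w : List Bool} (h₀ : w₀ ∈ W)
    (hw : ∀ y, ∃ z, w ++ y ++ z ∈ V∗) : ¬ IsMeagre (catOmega W (omegaPow V)) := by
  intro hm
  rw [isMeagre_iff_countable_union_isNowhereDense] at hm
  obtain ⟨S, hS, hc, hsub⟩ := hm
  obtain ⟨N, hN⟩ := (hc.insert ∅).exists_eq_range (Set.insert_nonempty _ _)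
  have hNd : ∀ k, IsNowhereDense (N k) := by
    intro k
    have : N k ∈ insert ∅ S := hN ▸ Set.mem_range_self k
    rcases this with h | h
    · rw [h]; exact isNowhereDense_empty
    · exact hS _ h
  have step : ∀ k p, ∃ g, g ∈ V∗ ∧ g ≠ [] ∧ Disjoint (cyl (p ++ g)) (N k) := by
    intro k p
    obtain ⟨y, hy⟩ := exists_avoid (hNd k) (p ++ w ++ [true])
    obtain ⟨z, hz⟩ := hw ([true] ++ y)
    refine ⟨_, hz, by simp, hy.mono_left (cyl_anti ?_)⟩
    exact ⟨z, by simp⟩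
  choose g hg1 hg2 hg3 using step
  let p : ℕ → List Bool := fun k => Nat.rec w₀ (fun k p => p ++ g k p) k
  let f : ℕ → List Bool := fun k => g k (p k)
  have hp : ∀ k, p k = w₀ ++ fl f k := by
    intro k
    induction k with
    | zero => simp [p, fl_zero]
    | succ k ih =>
      rw [fl_succ, ← List.append_assoc, ← ih]
  obtain ⟨ξ, hξ⟩ := exists_limit f fun i => hg2 _ _
  have hmem : wcat w₀ ξ ∈ catOmega W (omegaPow V) :=
    ⟨w₀, h₀, ξ, omegaPow_star ⟨f, fun i => ⟨hg1 _ _, hg2 _ _⟩, hξ⟩, rfl⟩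
  obtain ⟨T, hT, hxT⟩ := hsub hmem
  obtain ⟨k, rfl⟩ : T ∈ Set.range N := hN ▸ Set.mem_insert_of_mem _ hT
  refine Set.disjoint_left.1 (hg3 k (p k)) ?_ hxT
  have : p k ++ g k (p k) = w₀ ++ fl f (k+1) := by
    rw [fl_succ, ← List.append_assoc, ← hp]
  rw [this, wcat_mem_cyl]
  exact hξ _

theorem not_meagre_of_disjunctive {F : Set (ℕ → Bool)} (hF : IsRegOmega F) {ξ : ℕ → Bool}
    (hd : Disjunctive ξ) (hξ : ξ ∈ F) : ¬ IsMeagre F := by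
  obtain ⟨n, W, V, hreg, rfl⟩ := hF
  obtain ⟨i, w₀, hw₀, η, hη, rfl⟩ := Set.mem_iUnion.1 hξ
  obtain ⟨w, hw⟩ := dense_word (fq_of_reg (IsRegLang.star _ (hreg i).2)) (by
    intro u
    obtain ⟨x, hx⟩ := hd (List.replicate w₀.length true ++ u)
    obtain ⟨t, ht⟩ : w₀ <+: x ++ List.replicate w₀.length true := by
      refine prefix_of_mem_cyl ⟨η, rfl⟩ (cyl_anti (List.prefix_append _ u) ?_) (by simp)
      simpa using hx
    have h1 : η ∈ cyl (t ++ u) := by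
      rw [← wcat_mem_cyl (w := w₀), ← List.append_assoc, ht]; simpa using hx
    obtain ⟨f, hf, hf2⟩ := hη
    obtain ⟨z, hz⟩ : t ++ u <+: fl f (t ++ u).length :=
      prefix_of_mem_cyl h1 (hf2 _) (le_length_fl f (fun i => (hf i).2) _)
    refine ⟨t, z, ?_⟩
    rw [hz]
    refine Language.join_mem_kstar fun y hy => ?_
    obtain ⟨j, _, rfl⟩ := List.mem_map.1 hy
    exact (hf j).1)
  intro hm
  exact not_meagre hw₀ hw (hm.mono (Set.subset_iUnion (fun i => catOmega (W i) (omegaPow (V i))) i))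

/-! ### the language `V₃` -/

inductive InV : List Bool → Prop
  | a : InV [false]
  | b {u v w : List Bool} : InV u → InV v → InV w → InV (true :: (u ++ v ++ w))

theorem v3_eq {V₃ : Language Bool} (hfix : V3Eq false true V₃)
    (hleast : ∀ W : Language Bool, V3Eq false true W → ∀ u, u ∈ V₃ → u ∈ W) (u : List Bool) :
    u ∈ V₃ ↔ InV u := by
  constructor
  · refine hleast {u | InV u} ?_ u
    intro u
    constructor
    · intro h
      cases h with
      | a => left; rfl
      | b h1 h2 h3 => right; exact ⟨_, h1, _, h2, _, h3, by simp⟩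
    · rintro (rfl | ⟨u, hu, v, hv, w, hw, rfl⟩)
      · exact InV.a
      · have := InV.b hu hv hw
        change InV _
        simpa using this
  · intro h
    induction h with
    | a => exact (hfix _).2 (Or.inl rfl)
    | b _ _ _ h1 h2 h3 => exact (hfix _).2 (Or.inr ⟨_, h1, _, h2, _, h3, by simp⟩)

/-- height of the walk -/
def ht (w : List Bool) : ℤ := (w.map fun b => if b then 2 else -1).sum

@[simp] theorem ht_nil : ht [] = 0 := rfl

@[simp] theorem ht_append (u v : List Bool) : ht (u ++ v) = ht u + ht v := by simp [ht]

@[simp] theorem ht_true (u : List Bool) : ht (true :: u) = 2 + ht u := by simp [ht]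

@[simp] theorem ht_false (u : List Bool) : ht (false :: u) = -1 + ht u := by simp [ht]

theorem ht_ge (u : List Bool) : -(u.length : ℤ) ≤ ht u := by
  induction u with
  | nil => simp
  | cons b u ih => cases b <;> simp <;> omega

theorem ht_rep (n : ℕ) : ht (List.replicate n true) = 2 * n := by
  induction n with
  | zero => simp
  | succ n ih => rw [List.replicate_succ, ht_true, ih]; push_cast; ring

theorem prefix_append_cases {p u v : List Bool} (h : p <+: u ++ v) :
    p <+: u ∨ ∃ q, p = u ++ q ∧ q <+: v := by
  obtain ⟨t, ht⟩ := h
  rcases List.append_eq_append_iff.1 ht with ⟨c, rfl, _⟩ | ⟨c, rfl, h⟩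
  · left; exact List.prefix_append _ _
  · right; exact ⟨c, rfl, ⟨t, h.symm⟩⟩

theorem InV.ht_eq {u : List Bool} (h : InV u) : ht u = -1 := by
  induction h with
  | a => simp
  | b _ _ _ h1 h2 h3 => simp [h1, h2, h3]

theorem InV.ht_prefix {u : List Bool} (h : InV u) : ∀ p, p <+: u → p = u ∨ 0 ≤ ht p := by
  induction h with
  | a =>
    intro p hp
    rcases prefix_append_cases (u := [false]) (v := []) (by simpa using hp) with h | ⟨q, rfl, h⟩
    · rcases p with _ | ⟨b, p⟩
      · right; simp
      · left; simpa using h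
    · left; simpa using h
  | @b u v w hu hv hw h1 h2 h3 =>
    intro p hp
    rcases p with _ | ⟨c, p⟩
    · right; simp
    obtain ⟨rfl, hp2⟩ := List.cons_prefix_cons.1 hp
    rw [ht_true]
    rcases prefix_append_cases hp2 with h | ⟨q, rfl, h⟩
    · rcases prefix_append_cases h with h | ⟨q, rfl, h'⟩
      · rcases h1 p h with rfl | h
        · right; rw [hu.ht_eq]; norm_num
        · right; omega
      · rcases h2 q h' with rfl | h
        · right; rw [ht_append, hu.ht_eq, hv.ht_eq]; norm_num
        · right; rw [ht_append, hu.ht_eq]; omega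
    · rcases h3 q h with rfl | h
      · left; rfl
      · right; rw [ht_append, ht_append, hu.ht_eq, hv.ht_eq]; omega

theorem InV.prefix_free {u v : List Bool} (hu : InV u) (hv : InV v) (h : u <+: v) : u = v := by
  rcases hv.ht_prefix u h with h | h
  · exact h
  · rw [hu.ht_eq] at h; omega

theorem exists_ext (w : List Bool) : ∀ h : ℕ, ∃ L : List (List Bool), L.length = h ∧
    (∀ y ∈ L, InV y) ∧ ∃ z, L.flatten <+: w ++ z := by
  induction w with
  | nil =>
    intro h
    refine ⟨List.replicate h [false], by simp, fun y hy => ?_, _, List.prefix_rfl⟩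
    rw [List.eq_of_mem_replicate hy]; exact InV.a
  | cons b w ih =>
    intro h
    cases h with
    | zero => exact ⟨[], rfl, by simp, [], by simp⟩
    | succ h =>
      cases b with
      | false =>
        obtain ⟨L, rfl, h2, z, h3⟩ := ih h
        refine ⟨[false] :: L, rfl, ?_, z, by simpa using h3⟩
        intro y hy
        rcases List.mem_cons.1 hy with rfl | hy
        exacts [InV.a, h2 y hy]
      | true =>
        obtain ⟨L, h1, h2, z, h3⟩ := ih (h+3)
        match L, h1, h2, h3 with
        | u :: v :: x :: L, h1, h2, h3 =>
        refine ⟨(true :: (u ++ v ++ x)) :: L, by simpa using h1, ?_, z, by simpa using h3⟩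
        intro y hy
        rcases List.mem_cons.1 hy with rfl | hy
        · exact InV.b (h2 _ (by simp)) (h2 _ (by simp)) (h2 _ (by simp))
        · exact h2 y (by simp [hy])

theorem exists_ext_one (w : List Bool) : ∃ v, InV v ∧ ∃ z, v <+: w ++ z := by
  obtain ⟨L, h1, h2, h3⟩ := exists_ext w 1
  obtain ⟨v, rfl⟩ := List.length_eq_one_iff.1 h1
  exact ⟨v, h2 v (by simp), by simpa using h3⟩

theorem exists_disjunctive : ∃ ξ : ℕ → Bool, Disjunctive ξ ∧ ∀ v, InV v → ξ ∉ cyl v := by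
  obtain ⟨e, he⟩ := exists_surjective_nat (List Bool)
  let f : ℕ → List Bool := fun i => List.replicate ((e i).length + 1) true ++ e i
  have hf : ∀ i, f i ≠ [] := fun i => by simp [f]
  have hgood : ∀ i p, p <+: f i → 0 ≤ ht p := by
    intro i p hp
    rcases prefix_append_cases hp with h | ⟨q, rfl, h⟩
    · rw [List.prefix_replicate_iff] at h
      rw [h.2, ht_rep]; positivity
    · rw [ht_append, ht_rep]
      have := ht_ge q
      have := h.length_le
      push_cast; omega
  have hgood' : ∀ k p, p <+: fl f k → 0 ≤ ht p := by
    intro k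
    induction k with
    | zero => intro p hp; rw [fl_zero, List.prefix_nil] at hp; simp [hp]
    | succ k ih =>
      intro p hp
      rw [fl_succ] at hp
      rcases prefix_append_cases hp with h | ⟨q, rfl, h⟩
      · exact ih p h
      · rw [ht_append]; exact add_nonneg (ih _ List.prefix_rfl) (hgood _ _ h)
  obtain ⟨ξ, hξ⟩ := exists_limit f hf
  refine ⟨ξ, fun w => ?_, fun v hv hm => ?_⟩
  · obtain ⟨i, rfl⟩ := he w
    refine ⟨fl f i ++ List.replicate ((e i).length + 1) true, ?_⟩
    have := hξ (i+1)
    rw [fl_succ] at this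
    rw [List.append_assoc]; exact this
  · have := hgood' _ v (prefix_of_mem_cyl hm (hξ v.length) (le_length_fl f hf _))
    rw [hv.ht_eq] at this; omega

theorem not_abp {F₂ : Set (ℕ → Bool)} (hcl : IsClosed F₂) (hnd : IsNowhereDense F₂)
    (hF : F₂ = {ξ : ℕ → Bool | ∃ v, InV v ∧ ξ ∈ cyl v}ᶜ) : ¬ HasABP F₂ := by
  rintro ⟨E, F', _, hEo, hF'r, hF'm, hsub⟩
  replace hEo : IsOpen E := hEo
  replace hF'm : IsMeagre F' := hF'm
  have h1 : E ∩ F₂ᶜ = ∅ := by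
    by_contra hne
    refine not_isMeagre_of_isOpen (hEo.inter hcl.isOpen_compl)
      (Set.nonempty_iff_ne_empty.2 hne) (hF'm.mono fun x hx => hsub (Or.inr ⟨hx.1, hx.2⟩))
  have h2 : E = ∅ := by
    have : E ⊆ F₂ := fun x hx => by
      by_contra hx'
      exact Set.notMem_empty x (h1 ▸ ⟨hx, hx'⟩)
    have := interior_maximal (this.trans subset_closure) hEo
    rw [hnd] at this
    exact Set.subset_empty_iff.1 this
  obtain ⟨ξ, hd, hξ⟩ := exists_disjunctive
  refine not_meagre_of_disjunctive hF'r hd (hsub (Or.inl ⟨?_, by simp [h2]⟩)) hF'm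
  rw [hF]
  rintro ⟨v, hv, hv'⟩
  exact hξ v hv hv'

/-! ### measure -/

def VN : ℕ → Finset (List Bool)
  | 0 => ∅
  | n + 1 => insert [false] ((VN n ×ˢ VN n ×ˢ VN n).image
      fun t => true :: (t.1 ++ t.2.1 ++ t.2.2))

theorem mem_VN_succ {n : ℕ} {u : List Bool} : u ∈ VN (n+1) ↔ u = [false] ∨
    ∃ x ∈ VN n, ∃ y ∈ VN n, ∃ z ∈ VN n, true :: (x ++ y ++ z) = u := by
  simp only [VN, Finset.mem_insert, Finset.mem_image, Finset.mem_product, Prod.exists]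
  constructor
  · rintro (h | ⟨x, y, z, ⟨hx, hy, hz⟩, h⟩)
    · exact Or.inl h
    · exact Or.inr ⟨x, hx, y, hy, z, hz, h⟩
  · rintro (h | ⟨x, hx, y, hy, z, hz, h⟩)
    · exact Or.inl h
    · exact Or.inr ⟨x, y, z, ⟨hx, hy, hz⟩, h⟩

theorem VN_inV (n : ℕ) : ∀ u ∈ VN n, InV u := by
  induction n with
  | zero => simp [VN]
  | succ n ih =>
    intro u hu
    rcases mem_VN_succ.1 hu with rfl | ⟨x, hx, y, hy, z, hz, rfl⟩
    · exact InV.a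
    · exact InV.b (ih _ hx) (ih _ hy) (ih _ hz)

theorem VN_step (n : ℕ) : VN n ⊆ VN (n+1) := by
  induction n with
  | zero => simp [VN]
  | succ n ih =>
    intro u hu
    rcases mem_VN_succ.1 hu with rfl | ⟨x, hx, y, hy, z, hz, rfl⟩
    · exact mem_VN_succ.2 (Or.inl rfl)
    · exact mem_VN_succ.2 (Or.inr ⟨x, ih hx, y, ih hy, z, ih hz, rfl⟩)

theorem VN_mono : Monotone VN := monotone_nat_of_le_succ VN_step

theorem InV.mem_VN {u : List Bool} (h : InV u) : ∃ n, u ∈ VN n := by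
  induction h with
  | a => exact ⟨1, by simp [VN]⟩
  | b _ _ _ h1 h2 h3 =>
    obtain ⟨i, hi⟩ := h1
    obtain ⟨j, hj⟩ := h2
    obtain ⟨k, hk⟩ := h3
    refine ⟨max i (max j k) + 1, mem_VN_succ.2 (Or.inr
      ⟨_, VN_mono (by simp) hi, _, VN_mono (by simp) hj, _, VN_mono (by simp) hk, rfl⟩)⟩

theorem InV.append_inj {u v x y : List Bool} (hu : InV u) (hv : InV v) (h : u ++ x = v ++ y) :
    u = v ∧ x = y := by
  have : u = v := by
    rcases List.append_eq_append_iff.1 h with ⟨c, h1, _⟩ | ⟨c, h1, _⟩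
    · exact hu.prefix_free hv ⟨c, h1.symm⟩
    · exact (hv.prefix_free hu ⟨c, h1.symm⟩).symm
  subst this
  exact ⟨rfl, List.append_cancel_left h⟩

noncomputable def rr : ℕ → ℝ
  | 0 => 0
  | n + 1 => 1 / 2 + rr n ^ 3 / 2

theorem sum_VN (n : ℕ) : ∑ v ∈ VN n, (1 / 2 : ℝ) ^ v.length = rr n := by
  induction n with
  | zero => simp [VN, rr]
  | succ n ih =>
    rw [VN, Finset.sum_insert, Finset.sum_image, Finset.sum_product, rr, ← ih]
    · simp only [Finset.sum_product, List.length_cons, List.length_append, pow_succ, pow_add,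
        List.length_nil, pow_zero, one_mul, ← Finset.mul_sum, ← Finset.sum_mul]
      ring
    · rintro ⟨x, y, z⟩ h ⟨x', y', z'⟩ h' he
      simp only [Finset.coe_product, Set.mem_prod, Finset.mem_coe] at h h'
      simp only [List.cons.injEq, true_and, List.append_assoc] at he
      obtain ⟨rfl, he2⟩ := (VN_inV n _ h.1).append_inj (VN_inV n _ h'.1) he
      obtain ⟨rfl, rfl⟩ := (VN_inV n _ h.2.1).append_inj (VN_inV n _ h'.2.1) he2
      rfl
    · simp

theorem sqrt5 : Real.sqrt 5 ^ 2 = 5 := Real.sq_sqrt (by norm_num)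

theorem sqrt5_lt : Real.sqrt 5 < 3 := by
  have := sqrt5
  nlinarith [Real.sqrt_nonneg 5]

theorem sqrt5_gt : 1 < Real.sqrt 5 := by
  have := sqrt5
  nlinarith [Real.sqrt_nonneg 5]

theorem rr_nonneg (n : ℕ) : 0 ≤ rr n := by
  induction n with
  | zero => simp [rr]
  | succ n ih => rw [rr]; positivity

theorem gold_fix : 1 / 2 + ((Real.sqrt 5 - 1) / 2) ^ 3 / 2 = (Real.sqrt 5 - 1) / 2 := by
  have := sqrt5
  have h3 : Real.sqrt 5 ^ 3 = 5 * Real.sqrt 5 := by rw [pow_succ, this]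
  ring_nf
  rw [h3, this]; ring

theorem rr_le (n : ℕ) : rr n ≤ (Real.sqrt 5 - 1) / 2 := by
  induction n with
  | zero => rw [rr]; linarith [sqrt5_gt]
  | succ n ih =>
    rw [rr, ← gold_fix]
    have := pow_le_pow_left₀ (rr_nonneg n) ih 3
    linarith

theorem rr_mono : Monotone rr := by
  refine monotone_nat_of_le_succ fun n => ?_
  induction n with
  | zero => simp [rr]
  | succ n ih =>
    have := pow_le_pow_left₀ (rr_nonneg n) ih 3
    rw [rr, rr]; linarith

theorem rr_tendsto : Filter.Tendsto rr Filter.atTop (nhds ((Real.sqrt 5 - 1) / 2)) := by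
  have hb : BddAbove (Set.range rr) := ⟨_, by rintro _ ⟨n, rfl⟩; exact rr_le n⟩
  have h1 := tendsto_atTop_ciSup rr_mono hb
  set L := ⨆ n, rr n
  have hL0 : 0 ≤ L := ge_of_tendsto' h1 rr_nonneg
  have hL1 : L ≤ (Real.sqrt 5 - 1) / 2 := le_of_tendsto' h1 rr_le
  have h2 : Filter.Tendsto (fun n => rr (n+1)) Filter.atTop (nhds (1 / 2 + L ^ 3 / 2)) := by
    simp only [rr]
    exact ((h1.pow 3).div_const 2).const_add _
  have h3 := tendsto_nhds_unique h2 (h1.comp (Filter.tendsto_add_atTop_nat 1))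
  have h4 : (L - 1) * (L ^ 2 + L - 1) = 0 := by linarith
  have h5 : L = (Real.sqrt 5 - 1) / 2 := by
    rcases mul_eq_zero.1 h4 with h | h
    · linarith [sqrt5_lt]
    · have := sqrt5
      have h6 : (L - (Real.sqrt 5 - 1) / 2) * (L + (Real.sqrt 5 + 1) / 2) = 0 := by
        ring_nf; rw [this]; linarith
      rcases mul_eq_zero.1 h6 with h | h
      · linarith
      · linarith [sqrt5_gt]
  rwa [h5] at h1

theorem measure_F [mΩ : MeasurableSpace (ℕ → Bool)] [BorelSpace (ℕ → Bool)] (μ : Measure (ℕ → Bool))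
    (hμ : ∀ w : List Bool, μ (cyl w) = (2 : ENNReal)⁻¹ ^ w.length) :
    μ {ξ : ℕ → Bool | ∃ v, InV v ∧ ξ ∈ cyl v}ᶜ = ENNReal.ofReal ((3 - Real.sqrt 5) / 2) := by
  have hcyl : ∀ w : List Bool, MeasurableSet (cyl w) := fun w => (isOpen_cyl w).measurableSet
  have hU : {ξ : ℕ → Bool | ∃ v, InV v ∧ ξ ∈ cyl v} = ⋃ n, ⋃ v ∈ VN n, cyl v := by
    ext ξ
    simp only [Set.mem_ofPred_eq, Set.mem_iUnion, exists_prop]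
    constructor
    · rintro ⟨v, hv, h⟩
      obtain ⟨n, hn⟩ := hv.mem_VN
      exact ⟨n, v, hn, h⟩
    · rintro ⟨n, v, hv, h⟩
      exact ⟨v, VN_inV n v hv, h⟩
  have hn : ∀ n, μ (⋃ v ∈ VN n, cyl v) = ENNReal.ofReal (rr n) := by
    intro n
    rw [measure_biUnion_finset _ fun v _ => hcyl v, ← sum_VN, ENNReal.ofReal_sum_of_nonneg]
    · refine Finset.sum_congr rfl fun v _ => ?_
      rw [hμ, ENNReal.ofReal_pow (by norm_num)]
      congr 1
      rw [one_div, ENNReal.ofReal_inv_of_pos (by norm_num)]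
      simp
    · intros; positivity
    · intro u hu v hv huv
      refine Set.disjoint_left.2 fun ξ h1 h2 => huv ?_
      have hu' := VN_inV n u hu
      have hv' := VN_inV n v hv
      rcases le_total u.length v.length with h | h
      · exact hu'.prefix_free hv' (prefix_of_mem_cyl h1 h2 h)
      · exact (hv'.prefix_free hu' (prefix_of_mem_cyl h2 h1 h)).symm
  have hlim := tendsto_measure_iUnion_atTop (μ := μ) (s := fun n => ⋃ v ∈ VN n, cyl v)
    (fun m n h => Set.biUnion_subset_biUnion_left (VN_mono h))
  have hlim2 : Filter.Tendsto (μ ∘ fun n => ⋃ v ∈ VN n, cyl v) Filter.atTop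
      (nhds (ENNReal.ofReal ((Real.sqrt 5 - 1) / 2))) := by
    have := (ENNReal.continuous_ofReal.tendsto _).comp rr_tendsto
    refine this.congr fun n => ?_
    exact (hn n).symm
  have hS := tendsto_nhds_unique hlim hlim2
  have huniv : μ Set.univ = 1 := by rw [← cyl_nil, hμ]; simp
  rw [hU, measure_compl, hS, huniv, ← ENNReal.ofReal_one, ← ENNReal.ofReal_sub]
  · congr 1; ring
  · linarith [sqrt5_gt]
  · exact MeasurableSet.iUnion fun n => Finset.measurableSet_biUnion _ fun v _ => hcyl v
  · rw [hS]; exact ENNReal.ofReal_ne_top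

theorem stmt19 (V₃ : Language Bool)
    (hfix : V3Eq false true V₃)
    (hleast : ∀ W : Language Bool, V3Eq false true W → ∀ u, u ∈ V₃ → u ∈ W)
    (F₂ : Set (ℕ → Bool)) (hF₂ : F₂ = {ξ : ℕ → Bool | ∃ v ∈ V₃, ξ ∈ cyl v}ᶜ) :
    @IsClosed _ (cantorTop Bool) F₂ ∧
    @IsNowhereDense _ (cantorTop Bool) F₂ ∧
    (∀ μ : @MeasureTheory.Measure (ℕ → Bool) (cantorBorel Bool),
      (∀ w : List Bool, μ (cyl w) = (2 : ENNReal)⁻¹ ^ w.length) →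
        μ F₂ = ENNReal.ofReal ((3 - Real.sqrt 5) / 2)) ∧
    (0 : ℝ) < (3 - Real.sqrt 5) / 2 ∧
    ¬ HasABP F₂ := by
  have hF : F₂ = {ξ : ℕ → Bool | ∃ v, InV v ∧ ξ ∈ cyl v}ᶜ := by
    rw [hF₂]; simp only [v3_eq hfix hleast]
  have hcl : IsClosed F₂ := by
    rw [hF, isClosed_compl_iff]
    have : {ξ : ℕ → Bool | ∃ v, InV v ∧ ξ ∈ cyl v} = ⋃ v, ⋃ (_ : InV v), cyl v := by
      ext ξ; simp
    rw [this]
    exact isOpen_iUnion fun v => isOpen_iUnion fun _ => isOpen_cyl v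
  have hnd : IsNowhereDense F₂ := by
    rw [hcl.isNowhereDense_iff, Set.eq_empty_iff_forall_notMem]
    intro ξ hξ
    obtain ⟨n, hn⟩ := exists_cyl_subset isOpen_interior hξ
    obtain ⟨v, hv, z, hz⟩ := exists_ext_one (pre ξ n)
    obtain ⟨η, hη⟩ := cyl_nonempty (pre ξ n ++ z)
    have h1 := interior_subset (hn n le_rfl (cyl_anti (List.prefix_append _ _) hη))
    rw [hF] at h1
    exact h1 ⟨v, hv, cyl_anti hz hη⟩
  refine ⟨hcl, hnd, ?_, by linarith [sqrt5_lt], not_abp hcl hnd hF⟩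
  intro μ hμ
  rw [hF]
  exact @measure_F (cantorBorel Bool) (@BorelSpace.mk _ _ (cantorBorel Bool) rfl) μ hμ

end AutoBaire
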